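/- arXiv:2504.17283 — 9 statements merged into one kernel-verified Lean document; each statement's English description precedes it below -/
import Mathlib

section
/- Given two BCK-algebras A and B whose underlying sets intersect exactly in {0}, the BCK-union A ⊔ B (the set A ∪ B with x·y given by the operation of A when x, y ∈ A, by the operation of B when x, y ∈ B, and x·y = x when x and y lie in distinct components) is again a BCK-algebra. -/
/-!
Write `f` for the operation of the BCK-union. It restricts to the given operations on `A` and on
`B`; the only point to check is that `f x y = x` still holds for all `x`, `y` in different
components when one of them is the common element `0`, which is (BCK4) together with the identity
`x · 0 = x` (`BCKOn.op_zero`). So `f` makes both `A` and `B` BCK-algebras and satisfies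
`f x y = x` across the components, a description symmetric in `A` and `B`.

The axioms are then checked by the position of the variables. For (BCK1) with `x ∈ A`, the mixed
cases reduce to `(x · y) · x = 0` when only `z` is in `B` (`BCKOn.op_op_self`), to (BCK2) when only
`y` is in `B`, and to `x · x = 0` when both are.
-/

/-- A BCK-algebra structure on a subset `A` of an ambient type `α` (with a fixed
zero element), given by an operation `op`: `A` contains `0`, is closed under `op`,
and satisfies the BCK axioms (BCK1)–(BCK5) on its elements. -/
structure BCKOn {α : Type*} [Zero α] (A : Set α) (op : α → α → α) : Prop where
  zero_mem : (0 : α) ∈ A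
  closed : ∀ x ∈ A, ∀ y ∈ A, op x y ∈ A
  bck1 : ∀ x ∈ A, ∀ y ∈ A, ∀ z ∈ A, op (op (op x y) (op x z)) (op z y) = 0
  bck2 : ∀ x ∈ A, ∀ y ∈ A, op (op x (op x y)) y = 0
  bck3 : ∀ x ∈ A, op x x = 0
  bck4 : ∀ x ∈ A, op 0 x = 0
  bck5 : ∀ x ∈ A, ∀ y ∈ A, op x y = 0 → op y x = 0 → x = y

namespace BCKOn

variable {α : Type*} [Zero α] {A B : Set α} {op f : α → α → α}

theorem op_zero (h : BCKOn A op) {x : α} (hx : x ∈ A) : op x 0 = x := by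
  have h0 := h.zero_mem
  have hx0 := h.closed x hx 0 h0
  have hxx0 := h.closed x hx _ hx0
  apply h.bck5 _ hx0 _ hx
  · simpa only [h.bck3 x hx] using h.bck2 x hx x hx
  · exact h.bck5 _ hxx0 0 h0 (h.bck2 x hx 0 h0) (h.bck4 _ hxx0)

theorem op_op_self (h : BCKOn A op) {x y : α} (hx : x ∈ A) (hy : y ∈ A) :
    op (op x y) x = 0 := by
  have hxy := h.closed x hx y hy
  -- This is (BCK1) at `z = 0`.
  have := h.bck1 x hx y hy 0 h.zero_mem
  rwa [h.op_zero hx, h.bck4 y hy, h.op_zero (h.closed _ hxy _ hx)] at this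

theorem congr_op (h : BCKOn A op) (hf : ∀ x ∈ A, ∀ y ∈ A, f x y = op x y) : BCKOn A f := by
  have hc := h.closed
  have h0 := h.zero_mem
  refine ⟨h0, fun x hx y hy => ?_, fun x hx y hy z hz => ?_, fun x hx y hy => ?_,
    fun x hx => ?_, fun x hx => ?_, fun x hx y hy => ?_⟩
  · rw [hf x hx y hy]; exact hc x hx y hy
  · have hxy := hc x hx y hy
    have hxz := hc x hx z hz
    have hzy := hc z hz y hy
    rw [hf x hx y hy, hf x hx z hz, hf z hz y hy, hf _ hxy _ hxz, hf _ (hc _ hxy _ hxz) _ hzy]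
    exact h.bck1 x hx y hy z hz
  · have hxy := hc x hx y hy
    rw [hf x hx y hy, hf x hx _ hxy, hf _ (hc x hx _ hxy) y hy]
    exact h.bck2 x hx y hy
  · rw [hf x hx x hx]; exact h.bck3 x hx
  · rw [hf 0 h0 x hx]; exact h.bck4 x hx
  · rw [hf x hx y hy, hf y hy x hx]; exact h.bck5 x hx y hy

/-- (BCK1) for the union when `x` lies in `A`; the case `x ∈ B` follows by exchanging `A`
and `B`. -/
theorem bck1_union_of_left (hA : BCKOn A f) (hB : BCKOn B f)
    (hAB : ∀ x ∈ A, ∀ y ∈ B, f x y = x) (hBA : ∀ x ∈ B, ∀ y ∈ A, f x y = x)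
    {x y z : α} (hx : x ∈ A) (hy : y ∈ A ∪ B) (hz : z ∈ A ∪ B) :
    f (f (f x y) (f x z)) (f z y) = 0 := by
  rcases hy with hy | hy <;> rcases hz with hz | hz
  · exact hA.bck1 x hx y hy z hz
  · rw [hAB x hx z hz, hBA z hz y hy, hA.op_op_self hx hy, hB.bck4 z hz]
  · rw [hAB x hx y hy, hAB z hz y hy, hA.bck2 x hx z hz]
  · rw [hAB x hx y hy, hAB x hx z hz, hA.bck3 x hx, hB.bck4 _ (hB.closed z hz y hy)]

/-- An operation that makes `A` and `B` BCK-algebras and satisfies `f x y = x` whenever `x` and `y`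
come from different ones makes `A ∪ B` a BCK-algebra. -/
theorem union (hA : BCKOn A f) (hB : BCKOn B f)
    (hAB : ∀ x ∈ A, ∀ y ∈ B, f x y = x) (hBA : ∀ x ∈ B, ∀ y ∈ A, f x y = x) :
    BCKOn (A ∪ B) f where
  zero_mem := Or.inl hA.zero_mem
  closed := by
    rintro x (hx | hx) y (hy | hy)
    · exact Or.inl (hA.closed x hx y hy)
    · rw [hAB x hx y hy]; exact Or.inl hx
    · rw [hBA x hx y hy]; exact Or.inr hx
    · exact Or.inr (hB.closed x hx y hy)
  bck1 := by
    rintro x (hx | hx) y hy z hz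
    · exact bck1_union_of_left hA hB hAB hBA hx hy hz
    · exact bck1_union_of_left hB hA hBA hAB hx hy.symm hz.symm
  bck2 := by
    rintro x (hx | hx) y (hy | hy)
    · exact hA.bck2 x hx y hy
    · rw [hAB x hx y hy, hA.bck3 x hx, hB.bck4 y hy]
    · rw [hBA x hx y hy, hB.bck3 x hx, hA.bck4 y hy]
    · exact hB.bck2 x hx y hy
  bck3 := by
    rintro x (hx | hx)
    · exact hA.bck3 x hx
    · exact hB.bck3 x hx
  bck4 := by
    rintro x (hx | hx)
    · exact hA.bck4 x hx
    · exact hB.bck4 x hx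
  bck5 := by
    rintro x (hx | hx) y (hy | hy) hxy hyx
    · exact hA.bck5 x hx y hy hxy hyx
    · rw [← hAB x hx y hy, hxy, ← hBA y hy x hx, hyx]
    · rw [← hBA x hx y hy, hxy, ← hAB y hy x hx, hyx]
    · exact hB.bck5 x hx y hy hxy hyx

end BCKOn

/-- Given BCK-algebras `A` and `B` (on subsets of a common ambient type) whose
underlying sets intersect exactly in `{0}`, the BCK-union `A ⊔ B` — the set
`A ∪ B` with `x · y` given by the operation of `A` when `x, y ∈ A`, by the
operation of `B` when `x, y ∈ B`, and `x · y = x` when `x` and `y` lie in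
distinct components — is again a BCK-algebra. -/
theorem bck_union_is_bck {α : Type*} [Zero α] (A B : Set α)
    [∀ x, Decidable (x ∈ A)] [∀ x, Decidable (x ∈ B)]
    (opA opB : α → α → α) (hA : BCKOn A opA) (hB : BCKOn B opB)
    (hAB : A ∩ B = {0}) :
    BCKOn (A ∪ B) (fun x y =>
      if x ∈ A ∧ y ∈ A then opA x y
      else if x ∈ B ∧ y ∈ B then opB x y
      else x) := by
  have h0 : ∀ x, x ∈ A → x ∈ B → x = 0 := fun x ha hb => by
    have : x ∈ A ∩ B := ⟨ha, hb⟩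
    simpa [hAB] using this
  apply BCKOn.union
  · exact hA.congr_op fun x hx y hy => if_pos ⟨hx, hy⟩
  · refine hB.congr_op fun x hx y hy => ?_
    by_cases h : x ∈ A ∧ y ∈ A
    · -- Here `x = y = 0`, and both operations send `(0, 0)` to `0`.
      obtain rfl := h0 x h.1 hx
      obtain rfl := h0 y h.2 hy
      simp only [if_pos h, hA.bck3 0 h.1, hB.bck3 0 hx]
    · simp only [if_neg h, if_pos (And.intro hx hy)]
  · intro x hx y hy
    split_ifs with h h'
    · obtain rfl := h0 y h.2 hy
      exact hA.op_zero hx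
    · obtain rfl := h0 x hx h'.1
      exact hB.bck4 y hy
    · rfl
  · intro x hx y hy
    split_ifs with h h'
    · obtain rfl := h0 x h.1 hx
      exact hA.bck4 y hy
    · obtain rfl := h0 y hy h'.2
      exact hB.op_zero hx
    · rfl
end

section
/- For any BCK-algebra A, Iséki's extension A ⊕ ⊤ is a bounded BCK-algebra (⊤ is its greatest element) containing A as a subalgebra; moreover, if A has at least two elements, then A ⊕ ⊤ is non-commutative. -/
/-! In a BCK-algebra `x · 0 = x`: by (BCK2) with (BCK3) and (BCK4) each side is below the other,
and (BCK5) applies. Each BCK axiom for the extension reduces to the same axiom of `A` when no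
argument is `⊤`, and is otherwise a short computation from `0 · x = 0` and `x · ⊤ = 0`.
For `a ≠ 0` in `A`, the elements `a` and `⊤` do not commute: `⊤ · (⊤ · a) = ⊤ · ⊤ = 0`, whereas
`a · (a · ⊤) = a · 0 = a`. -/

/-- A BCK-algebra: an algebra `⟨α; ⋆, 0⟩` of type (2,0) satisfying (BCK1)–(BCK5). -/
class BCK (α : Type*) extends Zero α where
  star : α → α → α
  bck1 : ∀ x y z : α, star (star (star x y) (star x z)) (star z y) = 0
  bck2 : ∀ x y : α, star (star x (star x y)) y = 0
  bck3 : ∀ x : α, star x x = 0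
  bck4 : ∀ x : α, star 0 x = 0
  bck5 : ∀ x y : α, star x y = 0 → star y x = 0 → x = y

open BCK

/-- The BCK-meet `x ∧ y := y · (y · x)`. -/
def BCK.meet {α : Type*} [BCK α] (x y : α) : α := star y (star y x)
/-- Iséki's extension `A ⊕ ⊤`: the underlying set is `Option α` (with `none`
playing the role of the new top element `⊤` and `some 0` the zero), and the
operation of `α` is extended by `x · ⊤ = 0`, `⊤ · ⊤ = 0`, and `⊤ · x = ⊤`. -/
def isekiOp {α : Type*} [BCK α] : Option α → Option α → Option α
  | some x, some y => some (star x y)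
  | _, none => some 0
  | none, some _ => none

theorem bck_star_zero {α : Type*} [BCK α] (a : α) : star a 0 = a := by
  apply bck5
  · simpa only [bck3] using bck2 a a
  · exact bck5 _ _ (bck2 a 0) (bck4 _)

/-- Iséki's extension `A ⊕ ⊤` is a bounded BCK-algebra (with zero `some 0` and
greatest element `⊤ = none`), containing `A` as a subalgebra (via `some`);
moreover, if `A` has at least two elements, then `A ⊕ ⊤` is non-commutative
(where `x ∧ y := y · (y · x)`). -/
theorem iseki_extension_bounded_bck {α : Type*} [BCK α] :
    (∀ x y z : Option α,
      isekiOp (isekiOp (isekiOp x y) (isekiOp x z)) (isekiOp z y) = some 0) ∧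
    (∀ x y : Option α, isekiOp (isekiOp x (isekiOp x y)) y = some 0) ∧
    (∀ x : Option α, isekiOp x x = some 0) ∧
    (∀ x : Option α, isekiOp (some 0) x = some 0) ∧
    (∀ x y : Option α, isekiOp x y = some 0 → isekiOp y x = some 0 → x = y) ∧
    (∀ x : Option α, isekiOp x none = some 0) ∧
    ((some 0 : Option α) = some (0 : α) ∧
      ∀ x y : α, isekiOp (some x) (some y) = some (star x y)) ∧
    ((∃ x y : α, x ≠ y) →
      ∃ u v : Option α, isekiOp v (isekiOp v u) ≠ isekiOp u (isekiOp u v)) := by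
  refine ⟨?_, ?_, ?_, ?_, ?_, ?_, ⟨rfl, fun _ _ => rfl⟩, ?_⟩
  · rintro (_ | x) (_ | y) (_ | z) <;> simp [isekiOp, bck1, bck3, bck4]
  · rintro (_ | x) (_ | y) <;> simp [isekiOp, bck2, bck4]
  · rintro (_ | x) <;> simp [isekiOp, bck3]
  · rintro (_ | x) <;> simp [isekiOp, bck4]
  · rintro (_ | x) (_ | y) <;> simp [isekiOp]
    exact bck5 x y
  · rintro (_ | x) <;> rfl
  · rintro ⟨x, y, hxy⟩
    obtain ⟨a, ha⟩ : ∃ a : α, a ≠ 0 := by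
      by_contra! h
      exact hxy ((h x).trans (h y).symm)
    refine ⟨some a, none, ?_⟩
    simpa [isekiOp, bck_star_zero] using ha.symm
end

section
/- If A is a finite BCK-algebra of order n, then |C(A)| ≥ 3n − 2; consequently cd(A) ≥ (3n−2)/n². -/
open BCK

/-- The set of commuting pairs `C(A) = {(x,y) : x ∧ y = y ∧ x}` of a finite
BCK-algebra, as a `Finset`, where `x ∧ y := y · (y · x)`. -/
def commPairs (α : Type*) [Fintype α] [DecidableEq α] [BCK α] : Finset (α × α) :=
  Finset.univ.filter fun p : α × α => meet p.1 p.2 = meet p.2 p.1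

theorem BCK.star_zero {α : Type*} [BCK α] (x : α) : star x 0 = x := by
  apply bck5
  · have h := bck2 x x
    rwa [bck3] at h
  · exact bck5 _ _ (bck2 x 0) (bck4 _)

theorem BCK.zero_meet {α : Type*} [BCK α] (x : α) : meet 0 x = 0 := by
  simp only [meet, BCK.star_zero, bck3]

theorem BCK.meet_zero {α : Type*} [BCK α] (x : α) : meet x 0 = 0 := by
  simp only [meet, bck4]

theorem three_mul_card_sub_two_le {α : Type*} [Fintype α] [DecidableEq α] [BCK α] :
    3 * Fintype.card α - 2 ≤ (commPairs α).card := by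
  let S : Finset α := Finset.univ.erase 0
  let P : Finset (α × α) := Finset.univ.image fun x => (x, 0)
  let Q : Finset (α × α) := S.image fun x => (0, x)
  let R : Finset (α × α) := S.image fun x => (x, x)
  have hS : S.card = Fintype.card α - 1 := by
    simp [S, Finset.card_erase_of_mem, Finset.card_univ]
  have hP : P.card = Fintype.card α :=
    Finset.card_image_of_injective _ fun a b h => (Prod.ext_iff.1 h).1
  have hQ : Q.card = S.card :=
    Finset.card_image_of_injective _ fun a b h => (Prod.ext_iff.1 h).2
  have hR : R.card = S.card :=
    Finset.card_image_of_injective _ fun a b h => (Prod.ext_iff.1 h).1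
  have hPQ : Disjoint P Q := by
    rw [Finset.disjoint_left]
    rintro ⟨a, b⟩ h1 h2
    simp only [P, Q, S, Finset.mem_image, Finset.mem_erase, Finset.mem_univ, Prod.mk.injEq] at h1 h2
    grind
  have hPQR : Disjoint (P ∪ Q) R := by
    rw [Finset.disjoint_left]
    rintro ⟨a, b⟩ h1 h2
    simp only [P, Q, R, S, Finset.mem_union, Finset.mem_image, Finset.mem_erase, Finset.mem_univ,
      Prod.mk.injEq] at h1 h2
    grind
  have hsub : P ∪ Q ∪ R ⊆ commPairs α := by
    rintro ⟨a, b⟩ h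
    simp only [P, Q, R, Finset.mem_union, Finset.mem_image, Prod.mk.injEq] at h
    simp only [commPairs, Finset.mem_filter, Finset.mem_univ, true_and]
    rcases h with (⟨x, -, rfl, rfl⟩ | ⟨x, -, rfl, rfl⟩) | ⟨x, -, rfl, rfl⟩
    · rw [BCK.zero_meet, BCK.meet_zero]
    · rw [BCK.zero_meet, BCK.meet_zero]
    · rfl
  have h := Finset.card_le_card hsub
  rw [Finset.card_union_of_disjoint hPQR, Finset.card_union_of_disjoint hPQ, hP, hQ, hR, hS] at h
  omega

/-- If `A` is a finite BCK-algebra of order `n`, then `|C(A)| ≥ 3n − 2`;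
consequently `cd(A) = |C(A)|/n² ≥ (3n−2)/n²`. -/
theorem commPairs_card_ge {α : Type*} [Fintype α] [DecidableEq α] [BCK α]
    (n : ℕ) (hn : Fintype.card α = n) :
    3 * n - 2 ≤ (commPairs α).card ∧
      ((3 * n - 2 : ℕ) : ℚ) / (n : ℚ) ^ 2 ≤ ((commPairs α).card : ℚ) / (n : ℚ) ^ 2 := by
  subst hn
  refine ⟨three_mul_card_sub_two_le, ?_⟩
  have h := three_mul_card_sub_two_le (α := α)
  gcongr
end

section
/- Let A be a finite BCK-algebra with |A| = n and |C(A)| = k. Then the BCK-union A ⊔ 2 of A with the two-element BCK-algebra 2 satisfies |C(A ⊔ 2)| = k + 2n + 1; consequently cd(A ⊔ 2) = (k + 2n + 1)/(n+1)². -/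
open BCK

/-- The BCK-union `A ⊔ 𝟐` of `A` with the two-element BCK-algebra `𝟐 = {0, 1}`,
realized on `Option α`: `none` plays the role of the new element `1` and
`some 0` is the common zero. Within `A` the operation is that of `A`; since
`1` and any nonzero `a ∈ A` lie in distinct components, `a · 1 = a` and
`1 · a = 1`, while `1 · 0 = 1`, `0 · 1 = 0`, `1 · 1 = 0`. -/
def unionTwoOp {α : Type*} [BCK α] : Option α → Option α → Option α
  | some x, some y => some (star x y)
  | some x, none => some x
  | none, some _ => none
  | none, none => some 0

/-- The meet `x ∧ y := y · (y · x)` in `A ⊔ 𝟐`. -/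
def unionTwoMeet {α : Type*} [BCK α] (x y : Option α) : Option α :=
  unionTwoOp y (unionTwoOp y x)

/-- The new element `1` commutes with every element of `A ⊔ 𝟐`. -/
lemma unionTwoMeet_none_comm {α : Type*} [BCK α] (y : Option α) :
    unionTwoMeet none y = unionTwoMeet y none := by
  cases y with
  | none => rfl
  | some y => simp [unionTwoMeet, unionTwoOp, BCK.bck3]

lemma unionTwoMeet_some_comm_iff {α : Type*} [BCK α] (x y : α) :
    unionTwoMeet (some x) (some y) = unionTwoMeet (some y) (some x) ↔ meet x y = meet y x := by
  simp [unionTwoMeet, unionTwoOp, meet]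

/-- If `A` is a finite BCK-algebra with `|A| = n` and `|C(A)| = k`, then
`|C(A ⊔ 𝟐)| = k + 2n + 1`; consequently `cd(A ⊔ 𝟐) = (k + 2n + 1)/(n+1)²`. -/
theorem commPairs_card_union_two {α : Type*} [Fintype α] [DecidableEq α] [BCK α]
    (n k : ℕ) (hn : Fintype.card α = n) (hk : (commPairs α).card = k) :
    (Finset.univ.filter fun p : Option α × Option α =>
        unionTwoMeet p.1 p.2 = unionTwoMeet p.2 p.1).card = k + 2 * n + 1 ∧
      ((Finset.univ.filter fun p : Option α × Option α =>
          unionTwoMeet p.1 p.2 = unionTwoMeet p.2 p.1).card : ℚ) /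
          (Fintype.card (Option α) : ℚ) ^ 2 =
        ((k : ℚ) + 2 * n + 1) / ((n : ℚ) + 1) ^ 2 := by
  have key : (Finset.univ.filter fun p : Option α × Option α =>
      unionTwoMeet p.1 p.2 = unionTwoMeet p.2 p.1).card = k + 2 * n + 1 := by
    -- As a double sum of indicators, the count splits along `Option α = {none} ∪ α`.
    rw [commPairs, Finset.card_filter, Fintype.sum_prod_type] at hk
    rw [Finset.card_filter, Fintype.sum_prod_type]
    simp only [Fintype.sum_option, unionTwoMeet_none_comm, unionTwoMeet_some_comm_iff,
      Finset.sum_add_distrib, hk, if_true, Finset.sum_const, Finset.card_univ, Fintype.card_option, hn,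
      smul_eq_mul]
    ring
  refine ⟨key, ?_⟩
  rw [key, Fintype.card_option, hn]
  push_cast
  rfl
end

section
/- Let A be a finite BCK-algebra with |A| = n and |C(A)| = k. Then Iséki's extension A ⊕ ⊤ satisfies |C(A ⊕ ⊤)| = k + 3; consequently cd(A ⊕ ⊤) = (k + 3)/(n+1)². -/
open BCK

/-- The meet `x ∧ y := y · (y · x)` in `A ⊕ ⊤`. -/
def isekiMeet {α : Type*} [BCK α] (x y : Option α) : Option α :=
  isekiOp y (isekiOp y x)

theorem isekiMeet_some_some {α : Type*} [BCK α] (x y : α) :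
    isekiMeet (some x) (some y) = some (meet x y) := rfl

theorem isekiMeet_none_some {α : Type*} [BCK α] (x : α) :
    isekiMeet none (some x) = some x :=
  congrArg some (BCK.star_zero x)

theorem isekiMeet_some_none {α : Type*} [BCK α] (x : α) :
    isekiMeet (some x) none = some 0 := rfl

theorem isekiCommPairs_eq {α : Type*} [Fintype α] [DecidableEq α] [BCK α] :
    (Finset.univ.filter fun p : Option α × Option α =>
        isekiMeet p.1 p.2 = isekiMeet p.2 p.1) =
      (commPairs α).map (Function.Embedding.some.prodMap Function.Embedding.some) ∪
        {(none, none), (none, some 0), (some 0, none)} := by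
  ext ⟨a, b⟩
  rcases a with _ | x <;> rcases b with _ | y <;>
    simp [commPairs, isekiMeet_some_some, isekiMeet_none_some, isekiMeet_some_none, eq_comm]

theorem card_isekiCommPairs {α : Type*} [Fintype α] [DecidableEq α] [BCK α] :
    (Finset.univ.filter fun p : Option α × Option α =>
        isekiMeet p.1 p.2 = isekiMeet p.2 p.1).card = (commPairs α).card + 3 := by
  rw [isekiCommPairs_eq, Finset.card_union_of_disjoint, Finset.card_map]
  · simp
  · rw [Finset.disjoint_left]
    simp only [Finset.mem_map]
    rintro _ ⟨⟨x, y⟩, -, rfl⟩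
    simp

/-- If `A` is a finite BCK-algebra with `|A| = n` and `|C(A)| = k`, then Iséki's
extension satisfies `|C(A ⊕ ⊤)| = k + 3`; consequently
`cd(A ⊕ ⊤) = (k + 3)/(n+1)²`. -/
theorem commPairs_card_iseki {α : Type*} [Fintype α] [DecidableEq α] [BCK α]
    (n k : ℕ) (hn : Fintype.card α = n) (hk : (commPairs α).card = k) :
    (Finset.univ.filter fun p : Option α × Option α =>
        isekiMeet p.1 p.2 = isekiMeet p.2 p.1).card = k + 3 ∧
      ((Finset.univ.filter fun p : Option α × Option α =>
          isekiMeet p.1 p.2 = isekiMeet p.2 p.1).card : ℚ) /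
          (Fintype.card (Option α) : ℚ) ^ 2 =
        ((k : ℚ) + 3) / ((n : ℚ) + 1) ^ 2 := by
  have h := card_isekiCommPairs (α := α)
  rw [hk] at h
  refine ⟨h, ?_⟩
  rw [h, Fintype.card_option, hn]
  push_cast
  rfl
end

section
/- For each integer n ≥ 3, there exists a non-commutative BCK-algebra A of order n with |C(A)| = n² − 2, i.e. realizing the maximum commuting degree cd(A) = (n²−2)/n². -/
open BCK

/-- The BCK-algebra on `Fin (m + 3)` of the poset with least element `0` whose only strict relation
between nonzero elements is `1 < 2`; the disjunction in the definition is `x ≤ y` in this poset. -/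
@[reducible] def oneChainBCK (m : ℕ) : BCK (Fin (m + 3)) where
  zero := 0
  star x y := if x = 0 ∨ x = y ∨ (x = 1 ∧ y = 2) then 0 else x
  bck1 x y z := by
    change (ite _ _ _ : Fin (m + 3)) = (0 : Fin (m + 3))
    have h : (1 : Fin (m + 3)) ≠ 2 := by
      rw [Ne, Fin.ext_iff, Fin.val_two]; simp
    grind
  bck2 x y := by
    change (ite _ _ _ : Fin (m + 3)) = (0 : Fin (m + 3))
    grind
  bck3 x := by
    change (ite _ _ _ : Fin (m + 3)) = (0 : Fin (m + 3))
    grind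
  bck4 x := by
    change (ite _ _ _ : Fin (m + 3)) = (0 : Fin (m + 3))
    grind
  bck5 x y := by
    change (ite _ _ _ : Fin (m + 3)) = (0 : Fin (m + 3)) →
      (ite _ _ _ : Fin (m + 3)) = (0 : Fin (m + 3)) → x = y
    have h02 : (0 : Fin (m + 3)) ≠ 2 := by
      rw [Ne, Fin.ext_iff, Fin.val_two]; simp
    have h : (1 : Fin (m + 3)) ≠ 2 := by
      rw [Ne, Fin.ext_iff, Fin.val_two]; simp
    grind

lemma oneChainBCK_meet_comm_iff (m : ℕ) (x y : Fin (m + 3)) :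
    letI := oneChainBCK m
    meet x y = meet y x ↔ ¬ ((x = 1 ∧ y = 2) ∨ (x = 2 ∧ y = 1)) := by
  have h01 : (0 : Fin (m + 3)) ≠ 1 := by simp
  have h02 : (0 : Fin (m + 3)) ≠ 2 := by
    rw [Ne, Fin.ext_iff, Fin.val_two]; simp
  have h12 : (1 : Fin (m + 3)) ≠ 2 := by
    rw [Ne, Fin.ext_iff, Fin.val_two]; simp
  change (ite _ _ _ : Fin (m + 3)) = (ite _ _ _ : Fin (m + 3)) ↔ _
  grind

lemma oneChainBCK_card_commPairs (m : ℕ) :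
    letI := oneChainBCK m
    (commPairs (Fin (m + 3))).card = (m + 3) ^ 2 - 2 := by
  let := oneChainBCK m
  have h12 : (1 : Fin (m + 3)) ≠ 2 := by
    rw [Ne, Fin.ext_iff, Fin.val_two]; simp
  have h : commPairs (Fin (m + 3)) = ({(1, 2), (2, 1)} : Finset (Fin (m + 3) × Fin (m + 3)))ᶜ := by
    ext ⟨x, y⟩
    simp only [commPairs, Finset.mem_filter, Finset.mem_univ, true_and,
      oneChainBCK_meet_comm_iff, Finset.mem_compl, Finset.mem_insert, Finset.mem_singleton,
      Prod.mk.injEq]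
  rw [h, Finset.card_compl, Finset.card_pair (by simp [h12])]
  simp [sq]

/-- For each `n ≥ 3` there is a non-commutative BCK-algebra of order `n`
realizing the maximum commuting degree: `|C(A)| = n² − 2`, i.e.
`cd(A) = (n²−2)/n²`. -/
theorem exists_max_commuting_degree (n : ℕ) (hn : 3 ≤ n) :
    ∃ (α : Type) (_ : Fintype α) (_ : DecidableEq α) (_ : BCK α),
      Fintype.card α = n ∧
      (∃ x y : α, meet x y ≠ meet y x) ∧
      (commPairs α).card = n ^ 2 - 2 ∧
      ((commPairs α).card : ℚ) / (Fintype.card α : ℚ) ^ 2 =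
        ((n : ℚ) ^ 2 - 2) / (n : ℚ) ^ 2 := by
  obtain ⟨m, rfl⟩ := Nat.exists_eq_add_of_le' hn
  have hc := oneChainBCK_card_commPairs m
  refine ⟨Fin (m + 3), inferInstance, inferInstance, oneChainBCK m, Fintype.card_fin _,
    ⟨1, 2, fun h => (oneChainBCK_meet_comm_iff m 1 2).1 h (Or.inl ⟨rfl, rfl⟩)⟩, hc, ?_⟩
  have h2 : 2 ≤ (m + 3) ^ 2 := by nlinarith
  rw [hc, Fintype.card_fin, Nat.cast_sub h2]
  push_cast
  rfl
end

section
/- For each integer n ≥ 2, the structure M_n on {0, 1, …, n−1} with operation x·y = x if x > y and x·y = 0 if x ≤ y is a BCK-algebra, and for n ≥ 3 it satisfies |C(M_n)| = 3n − 2, i.e. it realizes the minimum commuting degree cd(M_n) = (3n−2)/n². -/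
/-!
In `M_n`, if `0 < x < y` then `y · (y · x) = y · y = 0` while `x · (x · y) = x · 0 = x`, so `x` and `y`
do not commute; and `0` commutes with everything. Hence `C(M_n)` is the union of the diagonal and the
two coordinate axes, which has `n + 2 (n - 1) = 3 n - 2` elements. The BCK axioms reduce to
case distinctions on the order of the arguments.
-/

/-- The union of the diagonal and the two axes in `{0, …, m}²` has `3 m + 1` elements: the row of
`0` contributes `m + 1`, and each of the other `m` rows contributes `2`. -/
theorem card_diagonal_union_axes (m : ℕ) :
    (Finset.univ.filter fun p : Fin (m + 1) × Fin (m + 1) =>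
      p.1 = p.2 ∨ p.1 = 0 ∨ p.2 = 0).card = 3 * m + 1 := by
  rw [Finset.card_filter, Fintype.sum_prod_type, Fin.sum_univ_succ]
  have row (i : Fin m) :
      (∑ b : Fin (m + 1), if i.succ = b ∨ i.succ = 0 ∨ b = 0 then 1 else 0) = 2 := by
    rw [Fin.sum_univ_succ]
    simp [Fin.succ_ne_zero]
  simp only [row]
  simp
  omega


/-- For each integer `n ≥ 2`, the structure `M_n` on `{0, 1, …, n−1} = Fin n`,
with operation `x · y = x` if `x > y` and `x · y = 0` if `x ≤ y` (here `z` is the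
element of value `0` and `op` this operation), is a BCK-algebra; and for `n ≥ 3`
it satisfies `|C(M_n)| = 3n − 2`, i.e. it realizes the minimum commuting degree
`cd(M_n) = (3n−2)/n²` (where `x ∧ y := y · (y · x)`). -/
theorem Mn_is_bck_and_min_commuting_degree (n : ℕ) (hn : 2 ≤ n)
    (z : Fin n) (hz : (z : ℕ) = 0)
    (op : Fin n → Fin n → Fin n)
    (hop : ∀ x y : Fin n, op x y = if y < x then x else z) :
    ((∀ x y w : Fin n, op (op (op x y) (op x w)) (op w y) = z) ∧
     (∀ x y : Fin n, op (op x (op x y)) y = z) ∧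
     (∀ x : Fin n, op x x = z) ∧
     (∀ x : Fin n, op z x = z) ∧
     (∀ x y : Fin n, op x y = z → op y x = z → x = y)) ∧
    (3 ≤ n →
      (Finset.univ.filter fun p : Fin n × Fin n =>
          op p.2 (op p.2 p.1) = op p.1 (op p.1 p.2)).card = 3 * n - 2 ∧
      ((Finset.univ.filter fun p : Fin n × Fin n =>
          op p.2 (op p.2 p.1) = op p.1 (op p.1 p.2)).card : ℚ) / (n : ℚ) ^ 2 =
        (3 * (n : ℚ) - 2) / (n : ℚ) ^ 2) := by
  have hz0 (x : Fin n) : ¬ x < z := by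
    rw [Fin.lt_def]; omega
  have hzp (x : Fin n) (h : x ≠ z) : z < x := by
    rw [Fin.lt_def]; have := Fin.val_ne_of_ne h; omega
  refine ⟨⟨?_, ?_, ?_, ?_, ?_⟩, fun _ => ?_⟩
  · intro x y w; simp only [hop]; grind
  · intro x y; simp only [hop]; grind
  · intro x; simp [hop]
  · intro x; simp [hop]
  · intro x y; simp only [hop]; grind
  · have hcard : (Finset.univ.filter fun p : Fin n × Fin n =>
        op p.2 (op p.2 p.1) = op p.1 (op p.1 p.2)).card = 3 * n - 2 := by
      have hcomm (p : Fin n × Fin n) : op p.2 (op p.2 p.1) = op p.1 (op p.1 p.2) ↔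
          p.1 = p.2 ∨ p.1 = z ∨ p.2 = z := by
        simp only [hop]; grind
      simp only [hcomm]
      obtain ⟨m, rfl⟩ : ∃ m, n = m + 1 := ⟨n - 1, by omega⟩
      obtain rfl : z = 0 := Fin.ext hz
      rw [card_diagonal_union_axes]
      omega
    refine ⟨hcard, ?_⟩
    -- The truncated subtraction `3 * n - 2` agrees with the rational one because `2 ≤ 3 * n`.
    rw [hcard, Nat.cast_sub (by omega)]
    push_cast
    rfl
end

section
/- For each integer n ≥ 3, if A is a BCK-algebra of order n with |C(A)| = 3n − 2 (equivalently, cd(A) = (3n−2)/n²), then A is isomorphic to M_n, the BCK-algebra on {0, 1, …, n−1} with operation x·y = x if x > y and x·y = 0 if x ≤ y. In other words, M_n is the unique BCK-algebra of order n achieving the minimum commuting degree. -/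
open BCK

section Basic

variable {α : Type*} [BCK α]

theorem star_zero_right (x : α) : star x 0 = x := by
  refine bck5 _ _ ?_ ?_
  · have h := bck2 x x
    rwa [bck3] at h
  · exact bck5 _ _ (bck2 x 0) (bck4 _)

theorem star_star_self (x y : α) : star (star x y) x = 0 := by
  have h := bck1 x y 0
  rwa [star_zero_right, bck4, star_zero_right] at h

theorem star_trans {x y z : α} (h₁ : star x y = 0) (h₂ : star y z = 0) : star x z = 0 := by
  have h := bck1 x z y
  rwa [h₁, h₂, star_zero_right, star_zero_right] at h

theorem star_star_star (x y : α) : star x (star x (star x y)) = star x y := by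
  refine bck5 _ _ (bck2 _ _) ?_
  have h := bck1 x y (star x (star x y))
  rwa [bck2, star_zero_right] at h

/-- An element commutes with everything of the form `x · y`; both meets equal `x · y`. -/
theorem meet_star_comm (x y : α) : meet x (star x y) = meet (star x y) x := by
  rw [meet, meet, star_star_self, star_zero_right, star_star_star]

theorem meet_zero_comm (x : α) : meet 0 x = meet x 0 := by
  rw [meet, meet, star_zero_right, bck3, bck4]

end Basic

/-- The pairs `(0, x)`, `(x, 0)`, `(x, x)`, which commute in every BCK-algebra, written as a
disjoint union. -/
def trivialPairs (α : Type*) [Fintype α] [DecidableEq α] [Zero α] : Finset (α × α) :=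
  Finset.univ.image (fun x : α => ((0 : α), x)) ∪
    ((Finset.univ.erase (0 : α)).image (fun x => (x, (0 : α))) ∪
      (Finset.univ.erase (0 : α)).image (fun x => (x, x)))

theorem card_trivialPairs (α : Type*) [Fintype α] [DecidableEq α] [Zero α] :
    (trivialPairs α).card
      = Fintype.card α + ((Fintype.card α - 1) + (Fintype.card α - 1)) := by
  unfold trivialPairs
  rw [Finset.card_union_of_disjoint, Finset.card_union_of_disjoint,
    Finset.card_image_of_injective, Finset.card_image_of_injective,
    Finset.card_image_of_injective, Finset.card_erase_of_mem (Finset.mem_univ _),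
    Finset.card_univ]
  · intro a b h; simpa using h
  · intro a b h; simpa using h
  · intro a b h; simpa using h
  · rw [Finset.disjoint_left]; grind
  · rw [Finset.disjoint_left]; grind

theorem trivialPairs_subset (α : Type*) [Fintype α] [DecidableEq α] [BCK α] :
    trivialPairs α ⊆ commPairs α := by
  rintro ⟨a, b⟩ h
  simp only [trivialPairs, Finset.mem_union, Finset.mem_image, Prod.mk.injEq] at h
  simp only [commPairs, Finset.mem_filter, Finset.mem_univ, true_and]
  rcases h with ⟨x, -, rfl, rfl⟩ | ⟨x, -, rfl, rfl⟩ | ⟨x, -, rfl, rfl⟩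
  · exact meet_zero_comm _
  · exact (meet_zero_comm _).symm
  · rfl

/-- At the minimum number of commuting pairs, only the trivial pairs commute. -/
theorem eq_of_comm {α : Type*} [Fintype α] [DecidableEq α] [BCK α]
    (hmin : (commPairs α).card = 3 * Fintype.card α - 2) {a b : α}
    (h : meet a b = meet b a) : a = 0 ∨ b = 0 ∨ a = b := by
  have hle : (commPairs α).card ≤ (trivialPairs α).card := by
    rw [hmin, card_trivialPairs]; omega
  have hmem : (a, b) ∈ trivialPairs α := by
    rw [Finset.eq_of_subset_of_card_le (trivialPairs_subset α) hle]
    simpa [commPairs] using h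
  simp only [trivialPairs, Finset.mem_union, Finset.mem_image, Prod.mk.injEq] at hmem
  rcases hmem with ⟨x, -, rfl, -⟩ | ⟨x, -, -, rfl⟩ | ⟨x, -, rfl, rfl⟩ <;> simp

/-- For each `n ≥ 3`, any BCK-algebra of order `n` with `|C(A)| = 3n − 2`
(equivalently, `cd(A) = (3n−2)/n²`) is isomorphic to `M_n`, the BCK-algebra on
`{0, 1, …, n−1} = Fin n` with operation `x · y = x` if `x > y` and `x · y = 0`
if `x ≤ y` (here described by `op`, with zero element `z`): there is a bijection
`f : A ≃ Fin n` with `f 0 = 0` and `f (x · y) = f x · f y`. In other words,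
`M_n` is the unique BCK-algebra of order `n` of minimum commuting degree. -/
theorem min_commuting_degree_unique {α : Type*} [Fintype α] [DecidableEq α] [BCK α]
    (n : ℕ) (hn : 3 ≤ n) (hcard : Fintype.card α = n)
    (z : Fin n) (hz : (z : ℕ) = 0)
    (op : Fin n → Fin n → Fin n)
    (hop : ∀ x y : Fin n, op x y = if y < x then x else z)
    (hmin : (commPairs α).card = 3 * n - 2) :
    ∃ f : α ≃ Fin n, f 0 = z ∧ ∀ x y : α, f (star x y) = op (f x) (f y) := by
  subst hcard
  have hstar (x y : α) : star x y = 0 ∨ star x y = x := by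
    rcases eq_of_comm hmin (meet_star_comm x y) with h | h | h
    · left; rw [h, bck4]
    · exact Or.inl h
    · exact Or.inr h.symm
  have htotal (x y : α) : star x y = 0 ∨ star y x = 0 := by
    rcases hstar x y with h₁ | h₁
    · exact Or.inl h₁
    rcases hstar y x with h₂ | h₂
    · exact Or.inr h₂
    have hcomm : meet x y = meet y x := by
      rw [meet, meet, h₁, h₂, bck3, bck3]
    rcases eq_of_comm hmin hcomm with h | h | h
    · left; rw [h, bck4]
    · right; rw [h, bck4]
    · left; rw [h, bck3]
  let _ : LinearOrder α :=
    { le := fun x y => star x y = 0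
      le_refl := bck3
      le_trans := fun _ _ _ => star_trans
      le_antisymm := bck5
      le_total := htotal
      toDecidableLE := fun x y => inferInstanceAs (Decidable (star x y = 0)) }
  have hle (x y : α) : x ≤ y ↔ star x y = 0 := Iff.rfl
  let f : α ≃o Fin (Fintype.card α) := (Fintype.orderIsoFinOfCardEq α rfl).symm
  have hf0 : f 0 = z := by
    refine le_antisymm ?_ (Fin.le_def.2 (by omega))
    rw [← f.apply_symm_apply z, f.le_iff_le, hle, bck4]
  refine ⟨f.toEquiv, hf0, fun x y => ?_⟩
  change f (star x y) = op (f x) (f y)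
  simp only [hop, f.lt_iff_lt]
  split_ifs with h
  · rw [← not_le, hle] at h
    rw [(hstar x y).resolve_left h]
  · rw [not_lt, hle] at h
    rw [h, hf0]
end

section
/- For every integer n ≥ 3 and every integer k with 1 ≤ k ≤ (n−1)(n−2)/2, there exists a BCK-algebra A of order n with |C(A)| = n² − 2k, i.e. cd(A) = (n² − 2k)/n². In other words, every possible commuting degree of a non-commutative BCK-algebra of order n is realized by some BCK-algebra of order n. -/
open BCK

/-- The BCK-algebra of a partial order `r` with least element `b`: `x · y` is `b` if `r x y`, and
`x` otherwise. -/
def bckOfRel {α : Type*} (r : α → α → Prop) [DecidableRel r] (b : α)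
    (hrefl : ∀ x, r x x) (htrans : ∀ x y z, r x y → r y z → r x z)
    (hanti : ∀ x y, r x y → r y x → x = y) (hbot : ∀ x, r b x) : BCK α where
  zero := b
  star x y := if r x y then b else x
  bck1 x y z := by
    change (if r _ _ then b else _) = b
    have := htrans x z y
    grind
  bck2 x y := by
    change (if r _ _ then b else _) = b
    grind
  bck3 x := if_pos (hrefl x)
  bck4 x := if_pos (hbot x)
  bck5 x y h1 h2 := by
    change (if r x y then b else x) = b at h1
    change (if r y x then b else y) = b at h2
    grind

/-- The order on `Fin (m + 1)` in which `0` is the least element and a nonzero `y` lies strictly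
above all of `1, …, y - 1` if `y - 1 ∈ S`, and above none of them otherwise. -/
def towerLE {m : ℕ} (S : Finset ℕ) (x y : Fin (m + 1)) : Prop :=
  x = y ∨ x = 0 ∨ (x < y ∧ y.val - 1 ∈ S)

instance {m : ℕ} (S : Finset ℕ) : DecidableRel (towerLE (m := m) S) :=
  fun _ _ => inferInstanceAs (Decidable (_ ∨ _ ∨ _))

/-- The BCK-algebra of the order `towerLE S`. -/
@[reducible] def towerBCK (m : ℕ) (S : Finset ℕ) : BCK (Fin (m + 1)) :=
  bckOfRel (towerLE S) 0 (fun _ => Or.inl rfl)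
    (fun x y z => by unfold towerLE; grind)
    (fun x y => by unfold towerLE; grind)
    (fun _ => Or.inr (Or.inl rfl))

/-- `x` and `y` commute unless they are distinct, nonzero and comparable. -/
theorem meet_eq_iff {m : ℕ} (S : Finset ℕ) (x y : Fin (m + 1)) :
    (@BCK.meet _ (towerBCK m S) x y = @BCK.meet _ (towerBCK m S) y x) ↔
      ¬ ((0 < x ∧ x < y ∧ y.val - 1 ∈ S) ∨ (0 < y ∧ y < x ∧ x.val - 1 ∈ S)) := by
  change ((if towerLE S y (if towerLE S y x then 0 else y) then 0 else y) =
    (if towerLE S x (if towerLE S x y then 0 else x) then 0 else x)) ↔ _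
  unfold towerLE
  grind

theorem exists_subset_sum (m k : ℕ) (hk : k ≤ ∑ j ∈ Finset.range m, j) :
    ∃ S ⊆ Finset.range m, ∑ j ∈ S, j = k := by
  induction m generalizing k with
  | zero => exact ⟨∅, by simp, by simp at hk; simp [hk]⟩
  | succ m ih =>
    rw [Finset.sum_range_succ] at hk
    -- Greedy choice: use the largest part `m` whenever it fits. If it does not, then `k < m`,
    -- and the smaller parts still suffice because `m - 1 ≤ 0 + 1 + ⋯ + (m - 1)`.
    by_cases h : m ≤ k
    · obtain ⟨S, hS, hs⟩ := ih (k - m) (by omega)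
      have hm : m ∉ S := fun hm => by simpa using hS hm
      refine ⟨insert m S, ?_, ?_⟩
      · rw [Finset.range_add_one]
        exact Finset.insert_subset_insert _ hS
      · rw [Finset.sum_insert hm, hs]
        omega
    · obtain ⟨S, hS, hs⟩ := ih k (by
        cases m with
        | zero => omega
        | succ m => rw [Finset.sum_range_succ]; omega)
      exact ⟨S, hS.trans (Finset.range_mono (Nat.le_succ m)), hs⟩

/-- The number of strictly comparable pairs of nonzero elements is `∑ j ∈ S, j`: the element `j + 1`
has `j` nonzero elements below it if `j ∈ S`, and none otherwise. -/
theorem card_lt_pairs {m : ℕ} {S : Finset ℕ} (hS : S ⊆ Finset.range m) :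
    (Finset.univ.filter fun p : Fin (m + 1) × Fin (m + 1) =>
      0 < p.1 ∧ p.1 < p.2 ∧ p.2.val - 1 ∈ S).card = ∑ j ∈ S, j := by
  rw [Finset.card_filter, Fintype.sum_prod_type_right]
  have hcol (y : Fin (m + 1)) : (∑ x : Fin (m + 1), if 0 < x ∧ x < y ∧ y.val - 1 ∈ S then 1 else 0)
      = if y.val - 1 ∈ S then y.val - 1 else 0 := by
    rw [← Finset.card_filter]
    split_ifs with h
    · have : (Finset.univ.filter fun x : Fin (m + 1) => 0 < x ∧ x < y ∧ y.val - 1 ∈ S)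
          = Finset.Ioo 0 y := by ext; simp [h]
      rw [this, Fin.card_Ioo]
      simp
    · simp [h]
  simp only [hcol]
  rw [Fin.sum_univ_succ]
  simp only [Fin.val_zero, Nat.zero_sub, ite_self, zero_add, Fin.val_succ, Nat.add_sub_cancel]
  rw [Fin.sum_univ_eq_sum_range (fun j => if j ∈ S then j else 0) m, ← Finset.sum_filter,
    Finset.filter_mem_eq_inter, Finset.inter_eq_right.mpr hS]

theorem card_commPairs {m : ℕ} {S : Finset ℕ} (hS : S ⊆ Finset.range m) :
    (@commPairs (Fin (m + 1)) _ _ (towerBCK m S)).card + 2 * ∑ j ∈ S, j = (m + 1) ^ 2 := by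
  have hswap : (Finset.univ.filter fun p : Fin (m + 1) × Fin (m + 1) =>
      0 < p.2 ∧ p.2 < p.1 ∧ p.1.val - 1 ∈ S).card = ∑ j ∈ S, j := by
    rw [← card_lt_pairs hS]
    exact Finset.card_equiv (Equiv.prodComm _ _) (by simp)
  unfold commPairs
  simp only [meet_eq_iff]
  have h := Finset.card_filter_add_card_filter_not (s := Finset.univ)
    (fun p : Fin (m + 1) × Fin (m + 1) =>
      (0 < p.1 ∧ p.1 < p.2 ∧ p.2.val - 1 ∈ S) ∨ (0 < p.2 ∧ p.2 < p.1 ∧ p.1.val - 1 ∈ S))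
  rw [Finset.filter_or, Finset.card_union_of_disjoint, card_lt_pairs hS, hswap] at h
  · simp only [Finset.card_univ, Fintype.card_prod, Fintype.card_fin] at h
    rw [sq, ← h]
    ring
  · rw [Finset.disjoint_filter]
    intro p _ h1 h2
    exact lt_asymm h1.2.1 h2.2.1

/-- For every `n ≥ 3` and every `k` with `1 ≤ k ≤ (n−1)(n−2)/2`, there is a
BCK-algebra `A` of order `n` with `|C(A)| = n² − 2k`, i.e.
`cd(A) = (n² − 2k)/n²`: every possible commuting degree of a non-commutative
BCK-algebra of order `n` is realized by some BCK-algebra of order `n`. -/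
theorem every_commuting_degree_realized (n k : ℕ) (hn : 3 ≤ n)
    (hk1 : 1 ≤ k) (hk2 : k ≤ (n - 1) * (n - 2) / 2) :
    ∃ (α : Type) (_ : Fintype α) (_ : DecidableEq α) (_ : BCK α),
      Fintype.card α = n ∧
      (commPairs α).card = n ^ 2 - 2 * k ∧
      ((commPairs α).card : ℚ) / (Fintype.card α : ℚ) ^ 2 =
        ((n : ℚ) ^ 2 - 2 * k) / (n : ℚ) ^ 2 := by
  obtain ⟨m, rfl⟩ : ∃ m, n = m + 1 := ⟨n - 1, by omega⟩
  obtain ⟨S, hS, hs⟩ := exists_subset_sum m k (by rw [Finset.sum_range_id]; exact hk2)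
  have h := card_commPairs hS
  rw [hs] at h
  refine ⟨Fin (m + 1), inferInstance, inferInstance, towerBCK m S, Fintype.card_fin _,
    by omega, ?_⟩
  rw [Fintype.card_fin]
  have hq : ((@commPairs (Fin (m + 1)) _ _ (towerBCK m S)).card : ℚ) + 2 * k =
      ((m + 1 : ℕ) : ℚ) ^ 2 := by exact_mod_cast h
  rw [← hq, add_sub_cancel_right]
end
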